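/- arXiv:1402.1875 — 2 statements merged into one kernel-verified Lean document; each statement's English description precedes it below -/
import Mathlib

section
/- If X is a metric ANR, then cat_g X = cat X: the least n such that X is covered by n+1 arbitrary subsets each contractible in X equals the least n such that X is covered by n+1 open subsets each contractible in X (both taken to be ∞ if no such n exists). -/
universe u

/-- A metrizable topological space `K` is a *metric ANR* if for every metrizable space `Z`
and every closed embedding `e : K → Z`, some open neighborhood of the image of `e` in `Z`
retracts onto the image of `e`. -/
def IsMetricANR (K : Type u) [TopologicalSpace K] : Prop :=
  TopologicalSpace.MetrizableSpace K ∧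
  ∀ (Z : Type u) [TopologicalSpace Z], TopologicalSpace.MetrizableSpace Z →
    ∀ e : K → Z, Topology.IsClosedEmbedding e →
      ∃ (U : Set Z), IsOpen U ∧ Set.range e ⊆ U ∧
        ∃ r : C(U, Z), (∀ u : U, r u ∈ Set.range e) ∧
          ∀ (k : K) (h : e k ∈ U), r ⟨e k, h⟩ = e k

/-- A subset `A` of `X` is *contractible in `X`* if the inclusion `A ↪ X` is nullhomotopic,
i.e. the restriction of the identity map of `X` to `A` is nullhomotopic. -/
def ContractibleIn {X : Type*} [TopologicalSpace X] (A : Set X) : Prop :=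
  ((ContinuousMap.id X).restrict A).Nullhomotopic

/-- The generalized LS-category `cat_g X` of a space `X`: the least `n ∈ ℕ∞` such that `X` is
covered by `n + 1` arbitrary subsets, each contractible in `X` (and `∞` if none exists). -/
noncomputable def catgSpace (X : Type*) [TopologicalSpace X] : ℕ∞ :=
  sInf {n : ℕ∞ | ∃ m : ℕ, n = (m : ℕ∞) ∧ ∃ A : Fin (m + 1) → Set X,
    (∀ x, ∃ i, x ∈ A i) ∧ ∀ i, ContractibleIn (A i)}

/-- The (classical) LS-category `cat X` of a space `X`: the least `n ∈ ℕ∞` such that `X` is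
covered by `n + 1` *open* subsets, each contractible in `X` (and `∞` if none exists). -/
noncomputable def catSpace (X : Type*) [TopologicalSpace X] : ℕ∞ :=
  sInf {n : ℕ∞ | ∃ m : ℕ, n = (m : ℕ∞) ∧ ∃ A : Fin (m + 1) → Set X,
    (∀ x, ∃ i, x ∈ A i) ∧ ∀ i, IsOpen (A i) ∧ ContractibleIn (A i)}

open Topology unitInterval

/-- The truncated Kuratowski embedding. -/
noncomputable def kurEmb (X : Type u) [MetricSpace X] (x : X) : BoundedContinuousFunction X ℝ :=
  BoundedContinuousFunction.ofNormedAddCommGroup (fun y => min (dist x y) 1)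
    (by fun_prop) 1 (fun y => by
      rw [Real.norm_eq_abs, abs_of_nonneg (le_min dist_nonneg zero_le_one)]
      exact min_le_right _ _)

lemma kurEmb_apply {X : Type u} [MetricSpace X] (x y : X) :
    kurEmb X x y = min (dist x y) 1 := rfl

lemma kurEmb_dist_le {X : Type u} [MetricSpace X] (x x' : X) :
    dist (kurEmb X x) (kurEmb X x') ≤ dist x x' := by
  rw [BoundedContinuousFunction.dist_le dist_nonneg]
  intro y
  rw [kurEmb_apply, kurEmb_apply, Real.dist_eq]
  refine (abs_min_sub_min_le_max _ _ _ _).trans ?_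
  simp only [sub_self, abs_zero]
  exact max_le (abs_dist_sub_le x x' y) dist_nonneg

lemma kurEmb_continuous {X : Type u} [MetricSpace X] : Continuous (kurEmb X) :=
  (LipschitzWith.of_dist_le_mul (K := 1) (fun x y => by
    simpa using kurEmb_dist_le x y)).continuous

/-- A convex set in which the image of the embedding is closed. -/
def kurHull (X : Type u) [MetricSpace X] : Set (BoundedContinuousFunction X ℝ) :=
  {z | ∃ x : X, ∃ c : ℝ, 0 < c ∧ ∀ y, c * min (dist x y) 1 ≤ z y}

lemma kurHull_convex (X : Type u) [MetricSpace X] : Convex ℝ (kurHull X) := by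
  rintro z ⟨x, c, hc, hz⟩ w ⟨x', c', hc', hw⟩ a b ha hb hab
  have hnn : ∀ (x y : X), 0 ≤ min (dist x y) 1 := fun x y => le_min dist_nonneg zero_le_one
  rcases ha.eq_or_lt with rfl | ha
  · have : b = 1 := by linarith
    subst this
    exact ⟨x', c', hc', fun y => by simpa using hw y⟩
  · refine ⟨x, a * c, mul_pos ha hc, fun y => ?_⟩
    have h1 := mul_le_mul_of_nonneg_left (hz y) ha.le
    have h2 := mul_nonneg hb ((mul_nonneg hc'.le (hnn x' y)).trans (hw y))
    simp only [BoundedContinuousFunction.coe_add, BoundedContinuousFunction.coe_smul,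
      Pi.add_apply, smul_eq_mul]
    nlinarith

lemma kurEmb_mem (X : Type u) [MetricSpace X] (x : X) : kurEmb X x ∈ kurHull X :=
  ⟨x, 1, one_pos, fun y => by rw [kurEmb_apply, one_mul]⟩

/-- The key estimate. -/
lemma kurEmb_near {X : Type u} [MetricSpace X] {z : BoundedContinuousFunction X ℝ} {x : X} {c : ℝ}
    (hc : 0 < c) (h : ∀ y, c * min (dist x y) 1 ≤ z y) {ε : ℝ} (hε1 : ε ≤ 1) {y : X}
    (hy : dist z (kurEmb X y) < c * ε) : dist x y < ε := by
  have h1 := (BoundedContinuousFunction.dist_coe_le_dist (f := z) (g := kurEmb X y) y).trans_lt hy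
  have h2 : kurEmb X y y = 0 := by simp [kurEmb_apply]
  rw [h2, Real.dist_eq, sub_zero] at h1
  have h3 : c * min (dist x y) 1 < c * ε := (h y).trans_lt ((le_abs_self _).trans_lt h1)
  have h4 := lt_of_mul_lt_mul_left h3 hc.le
  rcases min_lt_iff.1 h4 with h5 | h5
  · exact h5
  · linarith

lemma kurEmb_closed (X : Type u) [MetricSpace X] :
    IsClosedEmbedding (fun x : X => (⟨kurEmb X x, kurEmb_mem X x⟩ : kurHull X)) := by
  have hnear : ∀ (x : X) (ε : ℝ), 0 < ε → ∃ δ > 0, ∀ y,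
      dist (kurEmb X x) (kurEmb X y) < δ → dist x y < ε := by
    intro x ε hε
    refine ⟨1 * min ε 1, by positivity, fun y hy => ?_⟩
    exact (kurEmb_near (x := x) one_pos (fun y => by rw [kurEmb_apply, one_mul])
      (min_le_right _ _) hy).trans_le (min_le_left _ _)
  refine ⟨⟨⟨?_⟩, ?_⟩, ?_⟩
  · refine le_antisymm ?_ ?_
    · exact continuous_iff_le_induced.1 (kurEmb_continuous.subtype_mk _)
    · rw [le_iff_nhds]
      intro x
      rw [nhds_induced, Metric.nhds_basis_ball.ge_iff]
      intro ε hε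
      obtain ⟨δ, hδ, h⟩ := hnear x ε hε
      refine Filter.mem_comap.2 ⟨_, Metric.ball_mem_nhds _ hδ, fun y hy => ?_⟩
      rw [Metric.mem_ball, dist_comm]
      refine h y ?_
      rw [dist_comm]
      exact hy
  · intro x y hxy
    have hxy' : kurEmb X x = kurEmb X y := congrArg Subtype.val hxy
    by_contra hne
    obtain ⟨δ, hδ, h⟩ := hnear x (dist x y) (dist_pos.2 hne)
    exact lt_irrefl _ (h y (by rw [hxy', dist_self]; exact hδ))
  · rw [← closure_subset_iff_isClosed]
    rintro ⟨z, x, c, hc, hz⟩ hcl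
    refine ⟨x, Subtype.ext ?_⟩
    change kurEmb X x = z
    refine eq_of_forall_dist_le fun ε hε => ?_
    obtain ⟨_, ⟨y, rfl⟩, hy⟩ := Metric.mem_closure_iff.1 hcl (min (ε / 2) (c * min (ε / 2) 1))
      (by positivity)
    have hy' : dist z (kurEmb X y) < min (ε / 2) (c * min (ε / 2) 1) := hy
    have h1 := kurEmb_near hc hz (min_le_right _ _) (hy'.trans_le (min_le_right _ _))
    have h2 := hy'.trans_le (min_le_left _ _)
    have h3 := kurEmb_dist_le x y
    have h4 := h1.trans_le (min_le_left _ _)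
    have h5 := dist_triangle_right (kurEmb X x) z (kurEmb X y)
    linarith

/-- The main construction: in a space `X` that is a neighbourhood retract of a convex set, every
subset contractible in `X` has an open neighbourhood contractible in `X`. -/
lemma open_nhd_aux {X : Type u} [TopologicalSpace X] [TopologicalSpace.MetrizableSpace X]
    {E : Type u} [NormedAddCommGroup E] [NormedSpace ℝ E] (e : C(X, E)) (he : IsInducing e)
    (Z V : Set E)
    (hZ : Convex ℝ Z) (hV : IsOpen V) (heZ : ∀ x, e x ∈ Z) (heV : ∀ x, e x ∈ V)
    (r : C(↥(Z ∩ V), X)) (hr : ∀ x, r ⟨e x, heZ x, heV x⟩ = x)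
    (A : Set X) (hA : ContractibleIn A) : ∃ U, A ⊆ U ∧ IsOpen U ∧ ContractibleIn U := by
  obtain ⟨x₀, ⟨H⟩⟩ := hA
  let h : C(A, C(I, E)) := ContinuousMap.curry
    ⟨fun p : A × I => e (H (p.2, p.1)), by fun_prop⟩
  have h_apply : ∀ a t, h a t = e (H (t, a)) := fun a t => rfl
  have h0 : ∀ a, h a 0 = e a := fun a => by rw [h_apply, H.apply_zero]; rfl
  have h1 : ∀ a, h a 1 = e x₀ := fun a => by rw [h_apply, H.apply_one]; rfl
  have hε : ∀ a : A, ∃ ε > 0, ∀ t z, dist z (h a t) < ε → z ∈ V := by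
    intro a
    obtain ⟨ε, hε, hs⟩ := (isCompact_range (h a).continuous).exists_thickening_subset_open hV
      (by rintro _ ⟨t, rfl⟩; exact heV _)
    exact ⟨ε, hε, fun t z hz => hs (Metric.mem_thickening_iff.2 ⟨_, ⟨t, rfl⟩, hz⟩)⟩
  choose ε hε hεV using hε
  have hδ : ∀ a : A, ∃ δ > 0, δ ≤ 1 ∧ δ ≤ ε a ∧
      ∀ a' : A, dist (e a') (e a) < 3 * δ → dist (h a') (h a) < ε a := by
    intro a
    have hn : ∀ᶠ a' in 𝓝 a, dist (h a') (h a) < ε a :=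
      h.continuous.continuousAt (Metric.ball_mem_nhds (h a) (hε a))
    have hind : IsInducing (fun a : A => e a) := he.comp IsInducing.subtypeVal
    rw [hind.nhds_eq_comap, Filter.eventually_comap] at hn
    obtain ⟨η, hη, hb⟩ := Metric.eventually_nhds_iff.1 hn
    refine ⟨min (η / 3) (min 1 (ε a)), lt_min (by positivity) (lt_min one_pos (hε a)),
      (min_le_right _ _).trans (min_le_left _ _), (min_le_right _ _).trans (min_le_right _ _),
      fun a' ha' => hb (y := e a') ?_ a' rfl⟩
    have := min_le_left (η / 3) (min 1 (ε a))
    linarith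
  choose δ hδ hδ1 hδε hδh using hδ
  let U : Set X := ⋃ a : A, {x | dist (e x) (e a) < δ a}
  have hUo : IsOpen U := isOpen_iUnion fun a =>
    isOpen_lt (by fun_prop) continuous_const
  have hAU : A ⊆ U := fun a ha => Set.mem_iUnion.2 ⟨⟨a, ha⟩, by simpa using hδ ⟨a, ha⟩⟩
  refine ⟨U, hAU, hUo, ?_⟩
  let T : U → Set C(I, E) := fun x => convexHull ℝ {f | ∃ a : A, dist (e x) (e a) < δ a ∧ f = h a}
  letI : MetricSpace X := TopologicalSpace.metrizableSpaceMetric X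
  obtain ⟨Φ, hΦ⟩ : ∃ Φ : C(U, C(I, E)), ∀ x, Φ x ∈ T x := by
    refine exists_continuous_forall_mem_convex_of_local_const (fun x => convex_convexHull ℝ _) ?_
    intro x
    obtain ⟨a, ha⟩ := Set.mem_iUnion.1 x.2
    refine ⟨h a, ?_⟩
    have : ∀ᶠ y : U in 𝓝 x, dist (e y) (e a) < δ a :=
      (isOpen_lt (f := fun y : U => dist (e y) (e a)) (by fun_prop)
        continuous_const).mem_nhds ha
    filter_upwards [this] with y hy
    exact subset_convexHull ℝ _ ⟨a, hy, rfl⟩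
  have hΦZ : ∀ x t, Φ x t ∈ Z := by
    intro x t
    have hc : Convex ℝ {f : C(I, E) | f t ∈ Z} := fun f hf g hg a b ha hb hab =>
      hZ hf hg ha hb hab
    exact convexHull_min (by rintro f ⟨a, -, rfl⟩; exact heZ _) hc (hΦ x)
  have hΦ1 : ∀ x, Φ x 1 = e x₀ := by
    intro x
    have hc : Convex ℝ {f : C(I, E) | f 1 ∈ ({e x₀} : Set E)} := fun f hf g hg a b ha hb hab =>
      (convex_singleton (e x₀)) hf hg ha hb hab
    exact convexHull_min (by rintro f ⟨a, -, rfl⟩; exact h1 a) hc (hΦ x)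
  have key : ∀ x : U, ∃ a : A, dist (e x) (e a) < ε a ∧ dist (Φ x) (h a) < ε a := by
    intro x
    let S : Set ℝ := {s | ∃ a : A, dist (e x) (e a) < δ a ∧ s = δ a}
    obtain ⟨a₀, ha₀⟩ := Set.mem_iUnion.1 x.2
    have hSb : BddAbove S := ⟨1, by rintro _ ⟨a, -, rfl⟩; exact hδ1 a⟩
    have hS0 : 0 < sSup S := (hδ a₀).trans_le (le_csSup hSb ⟨a₀, ha₀, rfl⟩)
    obtain ⟨_, ⟨a, ha, rfl⟩, hlt⟩ := exists_lt_of_lt_csSup (s := S) ⟨_, a₀, ha₀, rfl⟩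
      (half_lt_self hS0)
    refine ⟨a, ha.trans_le (hδε a), ?_⟩
    have : T x ⊆ Metric.ball (h a) (ε a) := by
      refine convexHull_min ?_ (convex_ball _ _)
      rintro _ ⟨a', ha', rfl⟩
      refine hδh a a' ?_
      have h2 : δ a' ≤ sSup S := le_csSup hSb ⟨a', ha', rfl⟩
      have h3 := dist_triangle_left (e a') (e a) (e x)
      linarith
    exact this (hΦ x)
  have hΦV : ∀ x t, Φ x t ∈ V := by
    intro x t
    obtain ⟨a, -, ha⟩ := key x
    exact hεV a t _ ((ContinuousMap.dist_apply_le_dist t).trans_lt ha)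
  have hL : ∀ (x : U) (t : I), AffineMap.lineMap (e x) (Φ x 0) (t : ℝ) ∈ Z ∩ V := by
    intro x t
    refine ⟨hZ.lineMap_mem (heZ _) (hΦZ _ _) t.2, ?_⟩
    obtain ⟨a, ha, ha'⟩ := key x
    have := (convex_ball (h a 0) (ε a)).lineMap_mem (x := e x) (y := Φ x 0)
      (by rw [Metric.mem_ball, h0]; exact ha)
      ((ContinuousMap.dist_apply_le_dist 0).trans_lt ha') t.2
    exact hεV a 0 _ this
  let g : C(U, X) := ⟨fun x => r ⟨Φ x 0, hΦZ x 0, hΦV x 0⟩, by fun_prop⟩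
  have hom1 : ((ContinuousMap.id X).restrict U).Homotopic g := by
    refine ⟨⟨⟨fun p => r ⟨AffineMap.lineMap (e p.2) (Φ p.2 0) (p.1 : ℝ), hL p.2 p.1⟩, ?_⟩, ?_, ?_⟩⟩
    · refine r.continuous.comp (Continuous.subtype_mk ?_ _)
      simp only [AffineMap.lineMap_apply_module]
      fun_prop
    · intro x
      simpa using hr x
    · intro x
      simp [g]
  have hom2 : g.Homotopic (ContinuousMap.const U x₀) := by
    refine ⟨⟨⟨fun p => r ⟨Φ p.2 p.1, hΦZ p.2 p.1, hΦV p.2 p.1⟩, ?_⟩, ?_, ?_⟩⟩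
    · refine r.continuous.comp (Continuous.subtype_mk ?_ _)
      fun_prop
    · intro x
      rfl
    · intro x
      simpa [hΦ1] using hr x₀
  exact ⟨x₀, hom1.trans hom2⟩

lemma open_nhd_of_ANR {X : Type u} [TopologicalSpace X] (hX : IsMetricANR X)
    (A : Set X) (hA : ContractibleIn A) : ∃ U, A ⊆ U ∧ IsOpen U ∧ ContractibleIn U := by
  obtain ⟨hm, hX⟩ := hX
  letI : MetricSpace X := TopologicalSpace.metrizableSpaceMetric X
  have hcl := kurEmb_closed X
  obtain ⟨W, hW, hsub, r, hr, hre⟩ := hX (kurHull X) inferInstance _ hcl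
  obtain ⟨V, hV, rfl⟩ := isOpen_induced_iff.1 hW
  let φ := hcl.isEmbedding.toHomeomorph
  let ρ : C(↥(kurHull X ∩ V), X) :=
    ⟨fun z => φ.symm ⟨r ⟨⟨z.1, z.2.1⟩, z.2.2⟩, hr _⟩, by fun_prop⟩
  refine open_nhd_aux ⟨kurEmb X, kurEmb_continuous⟩
    (IsInducing.subtypeVal.comp hcl.isInducing) (kurHull X) V (kurHull_convex X) hV
    (kurEmb_mem X) (fun x => hsub ⟨x, rfl⟩) ρ ?_ A hA
  intro x
  change φ.symm _ = x
  rw [φ.symm_apply_eq]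
  exact Subtype.ext (hre x (hsub ⟨x, rfl⟩))

/-- If `X` is a metric ANR, then `cat_g X = cat X`. -/
theorem catgSpace_eq_catSpace_of_ANR {X : Type u} [TopologicalSpace X]
    (hX : IsMetricANR X) : catgSpace X = catSpace X := by
  have hset : {n : ℕ∞ | ∃ m : ℕ, n = (m : ℕ∞) ∧ ∃ A : Fin (m + 1) → Set X,
      (∀ x, ∃ i, x ∈ A i) ∧ ∀ i, ContractibleIn (A i)} =
      {n : ℕ∞ | ∃ m : ℕ, n = (m : ℕ∞) ∧ ∃ A : Fin (m + 1) → Set X,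
      (∀ x, ∃ i, x ∈ A i) ∧ ∀ i, IsOpen (A i) ∧ ContractibleIn (A i)} := by
    ext n
    constructor
    · rintro ⟨m, hn, A, hcov, hA⟩
      choose U hAU hU using fun i => open_nhd_of_ANR hX (A i) (hA i)
      exact ⟨m, hn, U, fun x => (hcov x).imp fun i hi => hAU i hi, hU⟩
    · rintro ⟨m, hn, A, hcov, hA⟩
      exact ⟨m, hn, A, hcov, fun i => (hA i).2⟩
  exact congrArg sInf hset
end

section
/- Let X be a Polish space (separable, completely metrizable) with cat_g X ≤ n. Then X can be presented as the inverse limit of a sequence of ANR spaces each of category at most n: there exist a sequence (L_j)_{j∈ℕ} of metrizable spaces, each a metric ANR with cat_g L_j ≤ n, and continuous maps q_{j+1} : L_{j+1} → L_j, such that X is homeomorphic to the inverse limit space {(x_j) ∈ Π_{j∈ℕ} L_j : q_{j+1}(x_{j+1}) = x_j for all j}, with the subspace topology of the product. -/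
universe u v

namespace PolishCat

open Set Filter Topology TopologicalSpace

/-- A Polish space embeds in `ℝ^ℕ` as a countable intersection of open sets. -/
theorem exists_embedding_Gdelta (X : Type v) [TopologicalSpace X] [PolishSpace X] :
    ∃ (f : X → ℕ → ℝ) (V : ℕ → Set (ℕ → ℝ)), IsEmbedding f ∧ (∀ k, IsOpen (V k)) ∧
      range f = ⋂ k, V k := by
  let := upgradeIsCompletelyMetrizable X
  obtain ⟨F, hF⟩ := Metric.PiNatEmbed.exists_embedding_to_hilbert_cube (X := X)
  have hJ : IsEmbedding (fun (z : ℕ → unitInterval) (n : ℕ) => (z n : ℝ)) :=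
    IsEmbedding.piMap (fun _ : ℕ => IsEmbedding.subtypeVal)
  set f : X → ℕ → ℝ := fun x n => (F x n : ℝ) with hfdef
  have hf : IsEmbedding f := hJ.comp hF
  refine ⟨f, ?_⟩
  let W : ℕ → Set (ℕ → ℝ) := fun k =>
    ⋃₀ {V | IsOpen V ∧ ∀ x y, f x ∈ V → f y ∈ V → dist x y < 1 / ((k : ℝ) + 1)}
  have hW : ∀ k, IsOpen (W k) := fun k => isOpen_sUnion fun V hV => hV.1
  have hG : IsGδ (closure (range f) ∩ ⋂ k, W k) := by
    apply IsGδ.inter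
    · let := metrizableSpaceMetric (ℕ → ℝ)
      exact isClosed_closure.isGδ
    · exact IsGδ.iInter_of_isOpen hW
  have heq : range f = closure (range f) ∩ ⋂ k, W k := by
    apply Subset.antisymm
    · rintro _ ⟨x, rfl⟩
      refine ⟨subset_closure ⟨x, rfl⟩, mem_iInter.2 fun k => ?_⟩
      have hpos : (0 : ℝ) < 1 / ((k : ℝ) + 1) / 2 := by positivity
      have hn := Metric.ball_mem_nhds x hpos
      rw [hf.nhds_eq_comap] at hn
      obtain ⟨t, ht, hts⟩ := hn
      obtain ⟨V, hVt, hVo, hxV⟩ := mem_nhds_iff.1 ht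
      refine ⟨V, ⟨hVo, fun y z hy hz => ?_⟩, hxV⟩
      have h1 : dist y x < _ := hts (hVt hy)
      have h2 : dist z x < _ := hts (hVt hz)
      have := dist_triangle_right y z x
      linarith
    · rintro y ⟨hyc, hyW⟩
      have hne : (comap f (𝓝 y)).NeBot := by
        rw [comap_neBot_iff]
        intro t ht
        obtain ⟨_, hz, x, rfl⟩ := mem_closure_iff_nhds.1 hyc t ht
        exact ⟨x, hz⟩
      have hc : Cauchy (comap f (𝓝 y)) := by
        rw [Metric.cauchy_iff]
        refine ⟨hne, fun ε hε => ?_⟩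
        obtain ⟨k, hk⟩ := exists_nat_one_div_lt hε
        obtain ⟨V, ⟨hVo, hV⟩, hyV⟩ := mem_iInter.1 hyW k
        exact ⟨f ⁻¹' V, preimage_mem_comap (hVo.mem_nhds hyV), fun a ha b hb =>
          (hV a b ha hb).trans hk⟩
      obtain ⟨x, hx⟩ := CompleteSpace.complete hc
      have h1 : Tendsto f (comap f (𝓝 y)) (𝓝 (f x)) := hf.continuous.continuousAt.mono_left hx
      exact ⟨x, tendsto_nhds_unique h1 tendsto_comap⟩
  rw [← heq] at hG
  obtain ⟨V, hV, h⟩ := hG.eq_iInter_nat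
  exact ⟨V, hf, hV, h⟩

/-- Basic convex neighbourhoods of zero in `ℝ^ℕ`. -/
def Wn (k : ℕ) : Set (ℕ → ℝ) := {x | ∀ i < k, |x i| < (1 / 2) ^ k}

theorem Wn_add {k : ℕ} {x y : ℕ → ℝ} (hx : x ∈ Wn (k + 1)) (hy : y ∈ Wn (k + 1)) :
    x + y ∈ Wn k := by
  intro i hi
  have h1 := hx i (by omega)
  have h2 := hy i (by omega)
  have h3 := abs_add_le (x i) (y i)
  have : ((1 : ℝ) / 2) ^ (k + 1) = (1 / 2) ^ k / 2 := by ring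
  simp only [Pi.add_apply]
  linarith

theorem Wn_anti {k l : ℕ} (h : k ≤ l) : Wn l ⊆ Wn k := by
  intro x hx i hi
  refine (hx i (by omega)).trans_le ?_
  exact pow_le_pow_of_le_one (by norm_num) (by norm_num) h

theorem Wn_convex (k : ℕ) : Convex ℝ (Wn k) := by
  intro x hx y hy a b ha hb hab i hi
  have h1 := abs_lt.1 (hx i hi)
  have h2 := abs_lt.1 (hy i hi)
  have : b = 1 - a := by linarith
  subst this
  simp only [Pi.add_apply, Pi.smul_apply, smul_eq_mul]
  rw [abs_lt]
  set c := ((1 : ℝ) / 2) ^ k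
  rcases eq_or_lt_of_le ha with h | h
  · subst h; simp; exact h2
  · constructor <;> nlinarith

theorem Wn_neg {k : ℕ} {x : ℕ → ℝ} (hx : x ∈ Wn k) : -x ∈ Wn k := by
  intro i hi
  simpa using hx i hi

theorem Wn_zero (k : ℕ) : (0 : ℕ → ℝ) ∈ Wn k := by
  intro i hi
  simp

theorem Wn_open (k : ℕ) : IsOpen (Wn k) := by
  have : Wn k = ⋂ i ∈ Finset.range k, {x : ℕ → ℝ | |x i| < (1 / 2) ^ k} := by
    ext x; simp [Wn]
  rw [this]
  refine isOpen_biInter_finset fun i _ => ?_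
  exact isOpen_lt (by fun_prop) continuous_const

theorem Wn_basis {s : Set (ℕ → ℝ)} (hs : s ∈ 𝓝 (0 : ℕ → ℝ)) : ∃ k, Wn k ⊆ s := by
  rw [nhds_pi, Filter.mem_pi] at hs
  obtain ⟨I, hI, t, ht, hts⟩ := hs
  have h1 : ∀ i, ∃ ε > 0, Metric.ball (0 : ℝ) ε ⊆ t i := fun i => Metric.mem_nhds_iff.1 (ht i)
  choose ε hε hεt using h1
  have h2 : ∀ i, ∀ᶠ k : ℕ in atTop, i < k ∧ ((1 : ℝ) / 2) ^ k < ε i := by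
    intro i
    refine (eventually_gt_atTop i).and ?_
    exact (tendsto_pow_atTop_nhds_zero_of_lt_one (by norm_num) (by norm_num)).eventually
      (gt_mem_nhds (hε i))
  have h3 : ∀ᶠ k : ℕ in atTop, ∀ i ∈ I, i < k ∧ ((1 : ℝ) / 2) ^ k < ε i :=
    (eventually_all_finite hI).2 fun i _ => h2 i
  obtain ⟨k, hk⟩ := h3.exists
  refine ⟨k, fun x hx => hts fun i hi => hεt i ?_⟩
  simpa using (hx i (hk i hi).1).trans (hk i hi).2

/-- Approximate extension of a map from an arbitrary subset of a metrizable space. -/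
theorem approx {M : Type*} [TopologicalSpace M] [MetrizableSpace M] (B : Set M)
    (H : M → ℕ → ℝ) (hH : ContinuousOn H B) (O : Set (ℕ → ℝ)) (hO : IsOpen O)
    (hHO : ∀ b ∈ B, H b ∈ O) :
    ∃ (N : Set M) (G : M → ℕ → ℝ), IsOpen N ∧ B ⊆ N ∧ ContinuousOn G N ∧
      ∀ b ∈ B, segment ℝ (H b) (G b) ⊆ O := by
  classical
  have hex : ∀ z ∈ O, ∃ k, ∀ w ∈ Wn k, z + w ∈ O := by
    intro z hz
    have : (fun w => z + w) ⁻¹' O ∈ 𝓝 (0 : ℕ → ℝ) :=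
      (hO.preimage (by fun_prop)).mem_nhds (by simpa using hz)
    obtain ⟨k, hk⟩ := Wn_basis this
    exact ⟨k, fun w hw => hk hw⟩
  let kk : ∀ z ∈ O, ℕ := fun z hz => Nat.find (hex z hz)
  have hkk : ∀ z hz, ∀ w ∈ Wn (kk z hz), z + w ∈ O := fun z hz => Nat.find_spec (hex z hz)
  have hkmin : ∀ z hz k, (∀ w ∈ Wn k, z + w ∈ O) → kk z hz ≤ k :=
    fun z hz k h => Nat.find_min' (hex z hz) h
  have hloc : ∀ b ∈ B, ∃ Q : Set M, IsOpen Q ∧ b ∈ Q ∧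
      ∀ b' ∈ Q, ∀ hb' : b' ∈ B, H b - H b' ∈ Wn (kk (H b') (hHO b' hb')) := by
    intro b hb
    set k := kk (H b) (hHO b hb) with hk
    have h1 : (fun z => H b - z) ⁻¹' (Wn (k + 1)) ∈ 𝓝 (H b) :=
      ((Wn_open _).preimage (by fun_prop)).mem_nhds (by simpa using Wn_zero _)
    have h2 := hH b hb h1
    rw [mem_map, mem_nhdsWithin] at h2
    obtain ⟨Q, hQo, hbQ, hQ⟩ := h2
    refine ⟨Q, hQo, hbQ, fun b' hb'Q hb' => ?_⟩
    have h3 : H b - H b' ∈ Wn (k + 1) := hQ ⟨hb'Q, hb'⟩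
    refine Wn_anti (hkmin (H b') (hHO b' hb') (k + 1) fun w hw => ?_) h3
    have h4 := hkk (H b) (hHO b hb) _ (Wn_add (Wn_neg h3) hw)
    convert h4 using 1
    abel
  choose! Q hQo hbQ hQ using hloc
  let N : Set M := ⋃ b ∈ B, Q b
  have hN : IsOpen N := isOpen_biUnion hQo
  have hBN : B ⊆ N := fun b hb => mem_biUnion hb (hbQ b hb)
  let T : N → Set (ℕ → ℝ) := fun y =>
    {g | ∀ hb : (y : M) ∈ B, g - H y ∈ Wn (kk (H y) (hHO y hb))}
  have hT : ∀ y, Convex ℝ (T y) := by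
    intro y g hg g' hg' a b ha hb hab hy
    have h := Wn_convex _ (hg hy) (hg' hy) ha hb hab
    convert h using 1
    have : b = 1 - a := by linarith
    subst this
    ext i
    simp
    ring
  obtain ⟨g, hg⟩ := by
    let := metrizableSpaceMetric M
    exact exists_continuous_forall_mem_convex_of_local_const hT (by
      rintro ⟨y, hy⟩
      obtain ⟨b, hb, hyQ⟩ := mem_iUnion₂.1 hy
      refine ⟨H b, ?_⟩
      filter_upwards [((hQo b hb).preimage continuous_subtype_val).mem_nhds hyQ] with z hz hzB
      exact hQ b hb z hz hzB)
  refine ⟨N, fun y => if h : y ∈ N then g ⟨y, h⟩ else 0, hN, hBN, ?_, ?_⟩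
  · rw [continuousOn_iff_continuous_domRestrict]
    convert g.continuous using 1
    ext y i
    simp
  · intro b hb z hz
    simp only [dif_pos (hBN hb)] at hz
    have h1 := hg ⟨b, hBN hb⟩ hb
    obtain ⟨α, β, hα, hβ, hαβ, rfl⟩ := hz
    have h2 := hkk (H b) (hHO b hb) _ (Wn_convex _ (Wn_zero _) h1 hα hβ hαβ)
    convert h2 using 1
    have : α = 1 - β := by linarith
    subst this
    ext i
    simp
    ring

/-- Clamping a real number to `[0,1]`. -/
noncomputable def cl (t : ℝ) : ℝ := max 0 (min 1 t)

theorem cl_cont : Continuous cl := by unfold cl; fun_prop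
theorem cl_mem (t : ℝ) : cl t ∈ Icc (0 : ℝ) 1 := by
  unfold cl; exact ⟨le_max_left _ _, max_le zero_le_one (min_le_left _ _)⟩
theorem cl_nonpos {t : ℝ} (h : t ≤ 0) : cl t = 0 := by
  unfold cl; rw [max_eq_left]; exact (min_le_right _ _).trans h
theorem cl_one {t : ℝ} (h : 1 ≤ t) : cl t = 1 := by
  unfold cl; rw [min_eq_left h]; simp
theorem cl_of_mem {t : ℝ} (h : t ∈ Icc (0 : ℝ) 1) : cl t = t := by
  unfold cl; rw [min_eq_right h.2, max_eq_right h.1]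

/-- A contraction of `A` inside `O` extends, up to a controlled deformation,
to a contraction of an open neighbourhood of `A` inside `O`. -/
theorem thicken (A : Set (ℕ → ℝ)) (H : (ℕ → ℝ) × ℝ → ℕ → ℝ)
    (hH : ContinuousOn H (A ×ˢ Icc 0 1)) (O : Set (ℕ → ℝ)) (hO : IsOpen O) (c : ℕ → ℝ)
    (hHO : ∀ a ∈ A, ∀ t ∈ Icc (0 : ℝ) 1, H (a, t) ∈ O) (hH0 : ∀ a ∈ A, H (a, 0) = a)
    (hH1 : ∀ a ∈ A, H (a, 1) = c) :
    ∃ (U : Set (ℕ → ℝ)) (K : (ℕ → ℝ) × ℝ → ℕ → ℝ), IsOpen U ∧ A ⊆ U ∧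
      ContinuousOn K (U ×ˢ univ) ∧ (∀ x ∈ U, ∀ t, K (x, t) ∈ O) ∧
      (∀ x ∈ U, ∀ t ≤ 0, K (x, t) = x) ∧ (∀ x ∈ U, ∀ t ≥ 1, K (x, t) = c) := by
  obtain ⟨N, G, hN, hAN, hG, hseg⟩ := approx (A ×ˢ Icc (0 : ℝ) 1) H hH O hO
    (fun p hp => hHO p.1 hp.1 p.2 hp.2)
  let α : ℝ → ℝ := fun t => cl (3 * t)
  let β : ℝ → ℝ := fun t => cl (3 * t - 1)
  let γ : ℝ → ℝ := fun t => cl (3 * t - 2)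
  have hα : Continuous α := cl_cont.comp (by fun_prop)
  have hβ : Continuous β := cl_cont.comp (by fun_prop)
  have hγ : Continuous γ := cl_cont.comp (by fun_prop)
  let K : (ℕ → ℝ) × ℝ → ℕ → ℝ := fun p =>
    (1 - γ p.2) • ((1 - α p.2) • p.1 + α p.2 • G (p.1, β p.2)) + γ p.2 • c
  let Ω₀ : Set ((ℕ → ℝ) × ℝ) := {p | (p.1, β p.2) ∈ N}
  have hb : Continuous (fun p : (ℕ → ℝ) × ℝ => (p.1, β p.2)) := by fun_prop
  have hΩ₀ : IsOpen Ω₀ := hN.preimage hb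
  have hK : ContinuousOn K Ω₀ := by
    have h1 : ContinuousOn (fun p : (ℕ → ℝ) × ℝ => G (p.1, β p.2)) Ω₀ :=
      hG.comp hb.continuousOn (fun p hp => hp)
    have h2 : Continuous (fun p : (ℕ → ℝ) × ℝ => α p.2) := by fun_prop
    have h3 : Continuous (fun p : (ℕ → ℝ) × ℝ => γ p.2) := by fun_prop
    refine ContinuousOn.add (ContinuousOn.smul (f := fun p : (ℕ → ℝ) × ℝ => 1 - γ p.2)
      (by fun_prop) (ContinuousOn.add ?_ ?_)) ?_
    · exact ContinuousOn.smul (f := fun p : (ℕ → ℝ) × ℝ => 1 - α p.2) (by fun_prop)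
        continuous_fst.continuousOn
    · exact ContinuousOn.smul h2.continuousOn h1
    · exact ContinuousOn.smul h3.continuousOn (by fun_prop)
  let Ω : Set ((ℕ → ℝ) × ℝ) := Ω₀ ∩ K ⁻¹' O
  have hΩ : IsOpen Ω := hK.isOpen_inter_preimage hΩ₀ hO
  let U : Set (ℕ → ℝ) := {x | ∀ t ∈ Icc (0 : ℝ) 1, (x, t) ∈ Ω}
  have hU : IsOpen U := by
    rw [isOpen_iff_mem_nhds]
    intro x hx
    exact isCompact_Icc.eventually_forall_of_forall_eventually
      (P := fun x t => (x, t) ∈ Ω) fun t ht => hΩ.mem_nhds (hx t ht)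
  have hcl : ∀ t x, K (x, t) = K (x, cl t) ∧ β t = β (cl t) := by
    intro t x
    have : α t = α (cl t) ∧ β t = β (cl t) ∧ γ t = γ (cl t) := by
      simp only [α, β, γ]
      rcases le_total t 0 with h | h
      · rw [cl_nonpos h, cl_nonpos (t := 3 * t), cl_nonpos (t := 3 * t - 1),
          cl_nonpos (t := 3 * t - 2), cl_nonpos (t := 3 * 0), cl_nonpos (t := 3 * 0 - 1),
          cl_nonpos (t := 3 * 0 - 2)] <;> first | linarith | exact ⟨rfl, rfl, rfl⟩
      · rcases le_total t 1 with h' | h'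
        · rw [cl_of_mem ⟨h, h'⟩]; simp
        · rw [cl_one h', cl_one (t := 3 * t), cl_one (t := 3 * t - 1),
            cl_one (t := 3 * t - 2), cl_one (t := 3 * 1), cl_one (t := 3 * 1 - 1),
            cl_one (t := 3 * 1 - 2)] <;> first | linarith | exact ⟨rfl, rfl, rfl⟩
    obtain ⟨h1, h2, h3⟩ := this
    refine ⟨?_, h2⟩
    simp only [K, h1, h2, h3]
  have hUΩ : ∀ x ∈ U, ∀ t, (x, t) ∈ Ω := by
    intro x hx t
    have h := hx (cl t) (cl_mem t)
    refine ⟨?_, ?_⟩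
    · change (x, β t) ∈ N
      rw [(hcl t x).2]; exact h.1
    · change K (x, t) ∈ O
      rw [(hcl t x).1]; exact h.2
  refine ⟨U, K, hU, ?_, ?_, fun x hx t => (hUΩ x hx t).2, ?_, ?_⟩
  · intro a ha t ht
    have hs : ∀ τ ∈ Icc (0 : ℝ) 1, segment ℝ (H (a, τ)) (G (a, τ)) ⊆ O :=
      fun τ hτ => hseg (a, τ) ⟨ha, hτ⟩
    refine ⟨hAN ⟨ha, cl_mem _⟩, ?_⟩
    change K (a, t) ∈ O
    simp only [K]
    rcases le_total (3 * t) 1 with h | h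
    · have h1 : γ t = 0 := cl_nonpos (by linarith)
      have h2 : β t = 0 := cl_nonpos (by linarith)
      have h3 := cl_mem (3 * t)
      rw [h1, h2]
      have h4 := hs 0 (by simp)
      rw [hH0 a ha] at h4
      apply h4
      exact ⟨1 - α t, α t, by simp only [α]; linarith [h3.2], h3.1, by ring, by simp⟩
    · have h1 : α t = 1 := cl_one h
      rcases le_total (3 * t) 2 with h' | h'
      · have h2 : γ t = 0 := cl_nonpos (by linarith)
        rw [h1, h2]
        apply hs (β t) (cl_mem _)
        simpa using right_mem_segment ℝ (H (a, β t)) (G (a, β t))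
      · have h2 : β t = 1 := cl_one (by linarith)
        have h3 := cl_mem (3 * t - 2)
        rw [h1, h2]
        have h4 := hs 1 (by simp)
        rw [hH1 a ha] at h4
        apply h4
        exact ⟨γ t, 1 - γ t, h3.1, by simp only [γ]; linarith [h3.2], by ring, by
          simp [add_comm]⟩
  · exact hK.mono fun p hp => (hUΩ p.1 hp.1 p.2).1
  · intro x hx t ht
    have h1 : γ t = 0 := cl_nonpos (by linarith)
    have h2 : α t = 0 := cl_nonpos (by linarith)
    simp [K, h1, h2]
  · intro x hx t ht
    have h1 : γ t = 1 := cl_one (by linarith)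
    simp [K, h1]

/-- The `i`-th leg of the telescope-type space. -/
def Leg {m : ℕ} (U : Fin (m + 1) → Set (ℕ → ℝ)) (i : Fin (m + 1)) :
    Set ((ℕ → ℝ) × (Fin (m + 1) → ℝ)) :=
  {p | (∀ j, j ≠ i → p.2 j < 1) ∧ (p.1 ∈ U i ∨ 2 < p.2 i)}

/-- The union of the legs. -/
def Tel {m : ℕ} (U : Fin (m + 1) → Set (ℕ → ℝ)) : Set ((ℕ → ℝ) × (Fin (m + 1) → ℝ)) :=
  ⋃ i, Leg U i

theorem isOpen_P {m : ℕ} (i : Fin (m + 1)) :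
    IsOpen {p : (ℕ → ℝ) × (Fin (m + 1) → ℝ) | ∀ j, j ≠ i → p.2 j < 1} := by
  have : {p : (ℕ → ℝ) × (Fin (m + 1) → ℝ) | ∀ j, j ≠ i → p.2 j < 1} =
      ⋂ j, {p | j ≠ i → p.2 j < 1} := by ext; simp
  rw [this]
  refine isOpen_iInter_of_finite fun j => ?_
  by_cases h : j = i
  · simp [h]
  · simp only [ne_eq, h, not_false_eq_true, forall_const]
    exact isOpen_lt ((continuous_apply j).comp continuous_snd) continuous_const

theorem isOpen_Leg {m : ℕ} {U : Fin (m + 1) → Set (ℕ → ℝ)} (hU : ∀ i, IsOpen (U i))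
    (i : Fin (m + 1)) : IsOpen (Leg U i) := by
  refine (isOpen_P i).inter (IsOpen.union ((hU i).preimage continuous_fst) ?_)
  exact isOpen_lt continuous_const ((continuous_apply i).comp continuous_snd)

theorem isOpen_Tel {m : ℕ} {U : Fin (m + 1) → Set (ℕ → ℝ)} (hU : ∀ i, IsOpen (U i)) :
    IsOpen (Tel U) := isOpen_iUnion (isOpen_Leg hU)

/-- The inductive step: neighbourhoods and the map from the telescope. -/
theorem glue {m : ℕ} (U : Fin (m + 1) → Set (ℕ → ℝ)) (hU : ∀ i, IsOpen (U i))
    (O : Set (ℕ → ℝ)) (c : Fin (m + 1) → ℕ → ℝ) (hc : ∀ i, c i ∈ O)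
    (K : Fin (m + 1) → (ℕ → ℝ) × ℝ → ℕ → ℝ)
    (hK : ∀ i, ContinuousOn (K i) (U i ×ˢ univ)) (hKO : ∀ i, ∀ x ∈ U i, ∀ t, K i (x, t) ∈ O)
    (hK0 : ∀ i, ∀ x ∈ U i, ∀ t ≤ 0, K i (x, t) = x)
    (hK1 : ∀ i, ∀ x ∈ U i, ∀ t ≥ 1, K i (x, t) = c i) :
    ∃ r : (ℕ → ℝ) × (Fin (m + 1) → ℝ) → ℕ → ℝ, ContinuousOn r (Tel U) ∧
      (∀ p ∈ Tel U, r p ∈ O) ∧ ∀ i, ∀ x ∈ U i, r (x, 0) = x := by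
  classical
  let Rel : (ℕ → ℝ) × (Fin (m + 1) → ℝ) → (ℕ → ℝ) → Prop := fun p v =>
    ∃ i, (∀ j, j ≠ i → p.2 j < 1) ∧
      ((p.1 ∈ U i ∧ v = K i (p.1, p.2 i - 1)) ∨ (2 < p.2 i ∧ v = c i))
  have huniq : ∀ p v w, Rel p v → Rel p w → v = w := by
    rintro p v w ⟨i, hi, hv⟩ ⟨j, hj, hw⟩
    by_cases hij : i = j
    · subst hij
      rcases hv with ⟨h1, rfl⟩ | ⟨h1, rfl⟩ <;> rcases hw with ⟨h2, rfl⟩ | ⟨h2, rfl⟩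
      · rfl
      · exact hK1 i _ h1 _ (by linarith)
      · exact (hK1 i _ h2 _ (by linarith)).symm
      · rfl
    · have h1 := hi j (Ne.symm hij)
      have h2 := hj i hij
      rcases hv with ⟨h3, rfl⟩ | ⟨h3, rfl⟩ <;> rcases hw with ⟨h4, rfl⟩ | ⟨h4, rfl⟩
      · rw [hK0 i _ h3 _ (by linarith), hK0 j _ h4 _ (by linarith)]
      all_goals linarith
  let r : (ℕ → ℝ) × (Fin (m + 1) → ℝ) → ℕ → ℝ := fun p =>
    if h : ∃ v, Rel p v then h.choose else 0
  have hr : ∀ p v, Rel p v → r p = v := by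
    intro p v h
    have h' : ∃ v, Rel p v := ⟨v, h⟩
    simp only [r, dif_pos h']
    exact huniq _ _ _ h'.choose_spec h
  refine ⟨r, ?_, ?_, ?_⟩
  · intro p hp
    apply ContinuousAt.continuousWithinAt
    obtain ⟨i, hi, h | h⟩ := mem_iUnion.1 hp
    · have hco : ContinuousAt (fun q : (ℕ → ℝ) × (Fin (m + 1) → ℝ) => K i (q.1, q.2 i - 1)) p := by
        have h1 : ContinuousAt (K i) (p.1, p.2 i - 1) :=
          (hK i).continuousAt (((hU i).prod isOpen_univ).mem_nhds ⟨h, mem_univ _⟩)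
        exact ContinuousAt.comp (f := fun q : (ℕ → ℝ) × (Fin (m + 1) → ℝ) => (q.1, q.2 i - 1)) h1
          (by fun_prop)
      refine hco.congr ?_
      filter_upwards [(isOpen_P i).mem_nhds hi,
        ((hU i).preimage continuous_fst).mem_nhds h] with q hq1 hq2
      exact (hr q _ ⟨i, hq1, Or.inl ⟨hq2, rfl⟩⟩).symm
    · have hco : ContinuousAt (fun q : (ℕ → ℝ) × (Fin (m + 1) → ℝ) => c i) p := continuousAt_const
      refine hco.congr ?_
      have hop : IsOpen {q : (ℕ → ℝ) × (Fin (m + 1) → ℝ) | 2 < q.2 i} :=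
        isOpen_lt continuous_const ((continuous_apply i).comp continuous_snd)
      filter_upwards [(isOpen_P i).mem_nhds hi, hop.mem_nhds h] with q hq1 hq2
      exact (hr q _ ⟨i, hq1, Or.inr ⟨hq2, rfl⟩⟩).symm
  · intro p hp
    obtain ⟨i, hi, h | h⟩ := mem_iUnion.1 hp
    · rw [hr p _ ⟨i, hi, Or.inl ⟨h, rfl⟩⟩]
      exact hKO i _ h _
    · rw [hr p _ ⟨i, hi, Or.inr ⟨h, rfl⟩⟩]
      exact hc i
  · intro i x hx
    rw [hr (x, 0) _ ⟨i, by simp, Or.inl ⟨hx, rfl⟩⟩]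
    exact hK0 i x hx _ (by simp)

/-- Open subsets of (metrizable) spaces with the Tietze extension property are ANRs. -/
theorem isMetricANR_open {Y : Type} [TopologicalSpace Y] [MetrizableSpace Y]
    [TietzeExtension.{u, 0} Y] (D : Set Y) (hD : IsOpen D) : IsMetricANR (ULift.{u, 0} D) := by
  refine ⟨?_, ?_⟩
  · exact (Homeomorph.ulift (X := D)).isEmbedding.metrizableSpace
  · intro Z _ hZ e he
    let := metrizableSpaceMetric Z
    let φ : C(ULift.{u, 0} D, Y) := ⟨fun p => p.down.1, by fun_prop⟩
    obtain ⟨g, hg⟩ := φ.exists_extension' he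
    have hg' : ∀ k, g (e k) = k.down.1 := fun k => congrFun hg k
    refine ⟨g ⁻¹' D, hD.preimage g.continuous, ?_, ?_⟩
    · rintro _ ⟨k, rfl⟩
      change g (e k) ∈ D
      rw [hg']; exact k.down.2
    · refine ⟨⟨fun z => e (ULift.up ⟨g z.1, z.2⟩), ?_⟩, fun z => ⟨_, rfl⟩, ?_⟩
      · refine he.continuous.comp (continuous_uliftUp.comp ?_)
        exact Continuous.subtype_mk (g.continuous.comp continuous_subtype_val) _
      · intro k h
        change e (ULift.up ⟨g (e k), h⟩) = e k
        congr 1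
        apply ULift.down_injective
        exact Subtype.ext (hg' k)

theorem catg_le_of_cover {X : Type*} [TopologicalSpace X] {m : ℕ} (A : Fin (m + 1) → Set X)
    (h1 : ∀ x, ∃ i, x ∈ A i) (h2 : ∀ i, ContractibleIn (A i)) : catgSpace X ≤ m :=
  sInf_le ⟨m, rfl, A, h1, h2⟩

theorem cover_of_catg_le {X : Type*} [TopologicalSpace X] {n : ℕ} (h : catgSpace X ≤ n) :
    ∃ m ≤ n, ∃ A : Fin (m + 1) → Set X, (∀ x, ∃ i, x ∈ A i) ∧ ∀ i, ContractibleIn (A i) := by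
  have hne : {n : ℕ∞ | ∃ m : ℕ, n = (m : ℕ∞) ∧ ∃ A : Fin (m + 1) → Set X,
    (∀ x, ∃ i, x ∈ A i) ∧ ∀ i, ContractibleIn (A i)}.Nonempty := by
    by_contra hne
    rw [not_nonempty_iff_eq_empty] at hne
    rw [catgSpace, hne, sInf_empty] at h
    exact absurd h (by simp)
  obtain ⟨m, hm, A, hA⟩ := csInf_mem hne
  refine ⟨m, ?_, A, hA⟩
  rw [catgSpace, hm] at h
  exact_mod_cast h

theorem catg_Tel {m : ℕ} (U : Fin (m + 1) → Set (ℕ → ℝ)) :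
    catgSpace (ULift.{u, 0} (Tel U)) ≤ m := by
  refine catg_le_of_cover (fun i => {p | p.down.1 ∈ Leg U i}) ?_ ?_
  · intro p
    obtain ⟨i, hi⟩ := mem_iUnion.1 p.down.2
    exact ⟨i, hi⟩
  · intro i
    have hsub : Leg U i ⊆ Tel U := subset_iUnion (Leg U) i
    let v : Fin (m + 1) → ℝ := Pi.single i 3
    have hv : ∀ x, (x, v) ∈ Leg U i := by
      intro x
      refine ⟨fun j hj => ?_, Or.inr ?_⟩
      · simp [v, Pi.single_eq_of_ne hj]
      · simp [v]; norm_num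
    let A : Set (ULift.{u, 0} (Tel U)) := {p | p.down.1 ∈ Leg U i}
    have hc : Continuous (fun p : A => p.1.down.1) := by fun_prop
    let f₁ : C(A, ULift.{u, 0} (Tel U)) := ⟨fun p => ULift.up ⟨(p.1.down.1.1, v), hsub (hv _)⟩,
      continuous_uliftUp.comp (Continuous.subtype_mk (by fun_prop) _)⟩
    refine ⟨ULift.up ⟨(0, v), hsub (hv 0)⟩, ContinuousMap.Homotopic.trans (g := f₁) ⟨?_⟩ ⟨?_⟩⟩
    · have hmem : ∀ q : unitInterval × A,
          (q.2.1.down.1.1, (1 - (q.1 : ℝ)) • q.2.1.down.1.2 + (q.1 : ℝ) • v) ∈ Leg U i := by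
        rintro ⟨⟨t, ht0, ht1⟩, p, hp1, hp2⟩
        refine ⟨fun j hj => ?_, ?_⟩
        · have := hp1 j hj
          simp only [v, Pi.add_apply, Pi.smul_apply, Pi.single_eq_of_ne hj, smul_eq_mul]
          rcases eq_or_lt_of_le ht0 with h | h
          · subst h; simpa using this
          · nlinarith
        · refine hp2.imp id fun h => ?_
          simp only [v, Pi.add_apply, Pi.smul_apply, Pi.single_eq_same, smul_eq_mul]
          rcases eq_or_lt_of_le ht0 with h' | h'
          · subst h'; simpa using h
          · nlinarith
      exact
        { toFun := fun q => ULift.up ⟨_, hsub (hmem q)⟩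
          continuous_toFun := continuous_uliftUp.comp (Continuous.subtype_mk (by fun_prop) _)
          map_zero_left := fun p => by
            apply ULift.down_injective
            apply Subtype.ext
            simp
          map_one_left := fun p => by
            apply ULift.down_injective
            apply Subtype.ext
            simp [f₁] }
    · exact
        { toFun := fun q => ULift.up ⟨((1 - (q.1 : ℝ)) • q.2.1.down.1.1, v), hsub (hv _)⟩
          continuous_toFun := continuous_uliftUp.comp (Continuous.subtype_mk (by fun_prop) _)
          map_zero_left := fun p => by
            apply ULift.down_injective
            apply Subtype.ext
            simp [f₁]
          map_one_left := fun p => by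
            apply ULift.down_injective
            apply Subtype.ext
            simp
            rfl }

/-- The contraction of a piece of `X`, seen in `ℝ^ℕ`. -/
theorem contraction_of {X : Type v} [TopologicalSpace X] {f : X → ℕ → ℝ} (hf : IsEmbedding f)
    (A : Set X) (hA : ContractibleIn A) :
    ∃ (H : (ℕ → ℝ) × ℝ → ℕ → ℝ) (c : ℕ → ℝ), c ∈ range f ∧
      ContinuousOn H ((f '' A) ×ˢ Icc 0 1) ∧
      (∀ a ∈ f '' A, ∀ t ∈ Icc (0 : ℝ) 1, H (a, t) ∈ range f) ∧
      (∀ a ∈ f '' A, H (a, 0) = a) ∧ (∀ a ∈ f '' A, H (a, 1) = c) := by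
  classical
  obtain ⟨y, ⟨h⟩⟩ := hA
  let e : X ≃ₜ range f := hf.toHomeomorph
  have hmem : ∀ a (ha : a ∈ f '' A), e.symm ⟨a, image_subset_range f A ha⟩ ∈ A := by
    rintro _ ⟨x, hx, rfl⟩
    have : e.symm ⟨f x, image_subset_range f A ⟨x, hx, rfl⟩⟩ = x := by
      rw [e.symm_apply_eq]; rfl
    rw [this]; exact hx
  have hfe : ∀ a (ha : a ∈ f '' A), f (e.symm ⟨a, image_subset_range f A ha⟩) = a := fun a ha =>
    congrArg Subtype.val (e.apply_symm_apply ⟨a, image_subset_range f A ha⟩)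
  let H : (ℕ → ℝ) × ℝ → ℕ → ℝ := fun p =>
    if ha : p.1 ∈ f '' A then f (h (projIcc 0 1 zero_le_one p.2, ⟨_, hmem p.1 ha⟩)) else 0
  refine ⟨H, f y, ⟨y, rfl⟩, ?_, ?_, ?_, ?_⟩
  · rw [continuousOn_iff_continuous_domRestrict]
    have hco : Continuous (fun p : ((f '' A) ×ˢ Icc (0 : ℝ) 1 : Set ((ℕ → ℝ) × ℝ)) =>
        f (h (projIcc 0 1 zero_le_one p.1.2, ⟨_, hmem p.1.1 p.2.1⟩))) := by
      refine hf.continuous.comp (h.continuous.comp (Continuous.prodMk ?_ ?_))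
      · exact continuous_projIcc.comp (by fun_prop)
      · refine Continuous.subtype_mk (e.symm.continuous.comp ?_) _
        exact Continuous.subtype_mk (by fun_prop) _
    convert hco using 1
    ext p : 1
    exact dif_pos p.2.1
  · intro a ha t ht
    simp only [H, dif_pos ha]
    exact ⟨_, rfl⟩
  · intro a ha
    simp only [H, dif_pos ha]
    simpa using hfe a ha
  · intro a ha
    simp only [H, dif_pos ha]
    simp

theorem step {X : Type v} [TopologicalSpace X] {f : X → ℕ → ℝ} (hf : IsEmbedding f)
    {m : ℕ} (A : Fin (m + 1) → Set X) (hA : ∀ x, ∃ i, x ∈ A i)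
    (hA' : ∀ i, ContractibleIn (A i)) (O : Set (ℕ → ℝ)) (hO : IsOpen O) (hfO : range f ⊆ O)
    (V : Set (ℕ → ℝ)) (hV : IsOpen V) (hfV : range f ⊆ V) :
    ∃ (U : Fin (m + 1) → Set (ℕ → ℝ)) (r : (ℕ → ℝ) × (Fin (m + 1) → ℝ) → ℕ → ℝ),
      (∀ i, IsOpen (U i)) ∧ range f ⊆ ⋃ i, U i ∧ (⋃ i, U i) ⊆ V ∧ ContinuousOn r (Tel U) ∧
      (∀ p ∈ Tel U, r p ∈ O) ∧ ∀ x ∈ ⋃ i, U i, r (x, 0) = x := by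
  choose H c hc hH hHf hH0 hH1 using fun i => contraction_of hf (A i) (hA' i)
  choose U K hU hAU hK hKO hK0 hK1 using fun i => thicken (f '' A i) (H i) (hH i) O hO (c i)
    (fun a ha t ht => hfO (hHf i a ha t ht)) (hH0 i) (hH1 i)
  obtain ⟨r, h1, h2, h3⟩ := glue (fun i => U i ∩ V) (fun i => (hU i).inter hV) O c
    (fun i => hfO (hc i)) K
    (fun i => (hK i).mono (prod_mono inter_subset_left Subset.rfl))
    (fun i x hx => hKO i x hx.1) (fun i x hx => hK0 i x hx.1) (fun i x hx => hK1 i x hx.1)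
  refine ⟨fun i => U i ∩ V, r, fun i => (hU i).inter hV, ?_, ?_, h1, h2, ?_⟩
  · rintro _ ⟨x, rfl⟩
    obtain ⟨i, hi⟩ := hA x
    exact mem_iUnion.2 ⟨i, hAU i ⟨x, hi, rfl⟩, hfV ⟨x, rfl⟩⟩
  · exact iUnion_subset fun i => inter_subset_right
  · intro x hx
    obtain ⟨i, hi⟩ := mem_iUnion.1 hx
    exact h3 i x hi

theorem zero_mem_Tel {m : ℕ} {U : Fin (m + 1) → Set (ℕ → ℝ)} {x : ℕ → ℝ}
    (hx : x ∈ ⋃ i, U i) : (x, (0 : Fin (m + 1) → ℝ)) ∈ Tel U := by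
  obtain ⟨i, hi⟩ := mem_iUnion.1 hx
  exact mem_iUnion.2 ⟨i, by simp, Or.inl hi⟩

theorem inverse_limit_aux {X : Type v} [TopologicalSpace X] [PolishSpace X]
    (n : ℕ) (hX : catgSpace X ≤ n) :
    ∃ (L : ℕ → Type u) (τ : ∀ j, TopologicalSpace (L j))
      (q : ∀ j, @ContinuousMap (L (j + 1)) (L j) (τ (j + 1)) (τ j)),
      (∀ j, @IsMetricANR (L j) (τ j)) ∧
      (∀ j, @catgSpace (L j) (τ j) ≤ n) ∧
      Nonempty
        (@Homeomorph X {x : ∀ j, L j // ∀ j, (q j) (x (j + 1)) = x j} _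
          (@instTopologicalSpaceSubtype (∀ j, L j) _ (@Pi.topologicalSpace ℕ L τ))) := by
  obtain ⟨f, V, hf, hV, hfV⟩ := exists_embedding_Gdelta X
  obtain ⟨m, hmn, A, hA, hA'⟩ := cover_of_catg_le hX
  have hfVk : ∀ k, range f ⊆ V k := fun k => hfV ▸ iInter_subset V k
  choose U r hU hfU hUV hr hrO hr0 using fun (k : ℕ) (O : {O : Set (ℕ → ℝ) // IsOpen O ∧
    range f ⊆ O}) => step hf A hA hA' O.1 O.2.1 O.2.2 (V k) (hV k) (hfVk k)
  -- the nested sequence of neighbourhoods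
  let Os : ℕ → {O : Set (ℕ → ℝ) // IsOpen O ∧ range f ⊆ O} := fun k =>
    Nat.rec ⟨univ, isOpen_univ, subset_univ _⟩
      (fun k O => ⟨⋃ i, U k O i, isOpen_iUnion (hU k O), hfU k O⟩) k
  have hOs : ∀ k, (Os (k + 1)).1 = ⋃ i, U k (Os k) i := fun k => rfl
  let u : ℕ → Fin (m + 1) → Set (ℕ → ℝ) := fun k => U k (Os k)
  let ρ : ℕ → (ℕ → ℝ) × (Fin (m + 1) → ℝ) → ℕ → ℝ := fun k => r k (Os k)
  have hρ : ∀ k, ContinuousOn (ρ k) (Tel (u k)) := fun k => hr k (Os k)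
  have hρO : ∀ k, ∀ p ∈ Tel (u (k + 1)), ρ (k + 1) p ∈ ⋃ i, u k i :=
    fun k => hrO (k + 1) (Os (k + 1))
  have hρ0 : ∀ k, ∀ x ∈ ⋃ i, u k i, ρ k (x, 0) = x := fun k => hr0 k (Os k)
  let q : ∀ j, C(ULift.{u, 0} (Tel (u (j + 1))), ULift.{u, 0} (Tel (u j))) := fun j =>
    ⟨fun p => ULift.up ⟨(ρ (j + 1) p.down.1, 0), zero_mem_Tel (hρO j _ p.down.2)⟩, by
      refine continuous_uliftUp.comp (Continuous.subtype_mk (Continuous.prodMk ?_ ?_) _)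
      · have := (continuousOn_iff_continuous_domRestrict.1 (hρ (j + 1))).comp
          (continuous_uliftDown (X := Tel (u (j + 1))))
        exact this
      · exact continuous_const⟩
  refine ⟨fun j => ULift.{u, 0} (Tel (u j)), fun j => inferInstance, q, ?_, ?_, ?_⟩
  · exact fun j => isMetricANR_open _ (isOpen_Tel (hU j (Os j)))
  · exact fun j => (catg_Tel (u j)).trans (by exact_mod_cast hmn)
  · have hfu : ∀ j x, f x ∈ ⋃ i, u j i := fun j x => hfU j (Os j) ⟨x, rfl⟩
    -- analysis of the threads
    have key : ∀ y : {x : ∀ j, ULift.{u, 0} (Tel (u j)) // ∀ j, (q j) (x (j + 1)) = x j},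
        ∀ j, (y.1 j).down.1 = ((y.1 0).down.1.1, 0) := by
      intro y
      have h1 : ∀ j, (y.1 j).down.1 = (ρ (j + 1) (y.1 (j + 1)).down.1, 0) := fun j => by
        conv_lhs => rw [← y.2 j]
        rfl
      have h2 : ∀ j, (y.1 j).down.1 = ((y.1 (j + 1)).down.1.1, 0) := by
        intro j
        rw [h1 j]
        have h3 := h1 (j + 1)
        have h4 : ρ (j + 1 + 1) (y.1 (j + 1 + 1)).down.1 ∈ ⋃ i, u (j + 1) i :=
          hρO (j + 1) _ (y.1 (j + 1 + 1)).down.2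
        rw [h3, hρ0 (j + 1) _ h4]
      intro j
      induction j with
      | zero => rw [h2 0]
      | succ j ih =>
        have h5 := h1 (j + 1)
        have h6 := h2 j
        rw [ih] at h6
        have h7 := congrArg Prod.fst h6
        simp only at h7
        rw [h7, h5]
    have hrange : ∀ y : {x : ∀ j, ULift.{u, 0} (Tel (u j)) // ∀ j, (q j) (x (j + 1)) = x j},
        (y.1 0).down.1.1 ∈ range f := by
      intro y
      rw [hfV, mem_iInter]
      intro k
      have h1 : (y.1 k).down.1.1 = (y.1 0).down.1.1 := by rw [key y k]
      rw [← h1]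
      have h2 : (y.1 k).down.1.1 ∈ ⋃ i, u k i := by
        have h3 : (y.1 k).down.1 = (ρ (k + 1) (y.1 (k + 1)).down.1, 0) := by
          conv_lhs => rw [← y.2 k]
          rfl
        rw [h3]
        exact hρO k _ (y.1 (k + 1)).down.2
      exact hUV k (Os k) h2
    let e : X ≃ₜ range f := hf.toHomeomorph
    refine ⟨⟨⟨fun x => ⟨fun j => ULift.up ⟨(f x, 0), zero_mem_Tel (hfu j x)⟩, fun j => ?_⟩,
      fun y => e.symm ⟨_, hrange y⟩, ?_, ?_⟩, ?_, ?_⟩⟩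
    · apply ULift.down_injective
      apply Subtype.ext
      change (ρ (j + 1) (f x, 0), (0 : Fin (m + 1) → ℝ)) = (f x, 0)
      rw [hρ0 (j + 1) _ (hfu (j + 1) x)]
    · intro x
      change e.symm ⟨f x, _⟩ = x
      rw [e.symm_apply_eq]; rfl
    · intro y
      apply Subtype.ext
      funext j
      apply ULift.down_injective
      apply Subtype.ext
      change (f (e.symm ⟨_, hrange y⟩), (0 : Fin (m + 1) → ℝ)) = (y.1 j).down.1
      rw [key y j]
      congr 1
      exact congrArg Subtype.val (e.apply_symm_apply ⟨_, hrange y⟩)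
    · refine Continuous.subtype_mk (continuous_pi fun j => ?_) _
      exact continuous_uliftUp.comp (Continuous.subtype_mk
        (hf.continuous.prodMk continuous_const) _)
    · refine e.symm.continuous.comp (Continuous.subtype_mk ?_ _)
      have h0 : Continuous (fun y : {x : ∀ j, ULift.{u, 0} (Tel (u j)) //
        ∀ j, (q j) (x (j + 1)) = x j} => y.1 0) := (continuous_apply 0).comp continuous_subtype_val
      exact continuous_fst.comp (continuous_subtype_val.comp (continuous_uliftDown.comp h0))

end PolishCat

/-- A Polish space `X` with `cat_g X ≤ n` is homeomorphic to the inverse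
limit of a sequence of metric ANR spaces `L j`, each of generalized category at most `n`,
along continuous bonding maps `q j : L (j+1) → L j`. -/
theorem polish_cat_le_inverse_limit_of_ANRs {X : Type v} [TopologicalSpace X] [PolishSpace X]
    (n : ℕ) (hX : catgSpace X ≤ n) :
    ∃ (L : ℕ → Type u) (τ : ∀ j, TopologicalSpace (L j))
      (q : ∀ j, @ContinuousMap (L (j + 1)) (L j) (τ (j + 1)) (τ j)),
      (∀ j, @IsMetricANR (L j) (τ j)) ∧
      (∀ j, @catgSpace (L j) (τ j) ≤ n) ∧
      Nonempty
        (@Homeomorph X {x : ∀ j, L j // ∀ j, (q j) (x (j + 1)) = x j} _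
          (@instTopologicalSpaceSubtype (∀ j, L j) _ (@Pi.topologicalSpace ℕ L τ))) := by
  exact PolishCat.inverse_limit_aux n hX
end
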